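/- arXiv:2208.04472 — 5 statements merged into one kernel-verified Lean document; each statement's English description precedes it below -/
import Mathlib

section
/- Let 0 < λ be a real number. For every η with 0 < η < λ, the density of states of the genus-0 KdV soliton condensate, u(μ) = μ/(π·√(λ² − μ²)) on (0, λ), satisfies the nonlinear dispersion relation ∫₀^λ ln((μ + η)/|μ − η|) · μ/(π·√(λ² − μ²)) dμ = η. -/
/-!
The substitution `μ = λ sin θ`, `η = λ sin φ` turns the dispersion relation into
`∫₀^{π/2} sin θ log |(sin θ + sin φ) / (sin θ - sin φ)| dθ = π sin φ`. By the sum-to-product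
formulas the quotient is `tan ((θ + φ) / 2) / tan ((θ - φ) / 2)`, so it suffices to integrate
`sin θ log |tan ((θ + φ) / 2)|` and to subtract the same integral with `-φ` in place of `φ`.
With `α = (θ + φ) / 2` and `β = (θ - φ) / 2`, this function has the primitive
`2 (sin β · sin α log |sin α| + cos β · cos α log |cos α|) + θ sin φ`. Since `x log |x|` is
continuous, the primitive is continuous on the whole line, and the singularities of the integrand
form a countable set, which the fundamental theorem of calculus ignores.
-/

open Real Set MeasureTheory

namespace SolitonCondensate

/-- The primitive of `θ ↦ sin θ * log |tan ((θ + φ) / 2)|` that is continuous on the whole line.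
The absolute values are omitted because `Real.log x = log |x|`. -/
noncomputable def sinMulLogTanPrimitive (φ θ : ℝ) : ℝ :=
  2 * (sin ((θ - φ) / 2) * (sin ((θ + φ) / 2) * log (sin ((θ + φ) / 2)))
    + cos ((θ - φ) / 2) * (cos ((θ + φ) / 2) * log (cos ((θ + φ) / 2)))) + θ * sin φ

lemma continuous_sinMulLogTanPrimitive (φ : ℝ) : Continuous (sinMulLogTanPrimitive φ) := by
  unfold sinMulLogTanPrimitive
  fun_prop

lemma sin_half_ne_zero_and_cos_half_ne_zero {x : ℝ} (hx : sin x ≠ 0) :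
    sin (x / 2) ≠ 0 ∧ cos (x / 2) ≠ 0 := by
  rw [← mul_div_cancel₀ x two_ne_zero, sin_two_mul] at hx
  exact ⟨right_ne_zero_of_mul (left_ne_zero_of_mul hx), right_ne_zero_of_mul hx⟩

lemma tan_half_ne_zero {x : ℝ} (hx : sin x ≠ 0) : tan (x / 2) ≠ 0 := by
  obtain ⟨hsin, hcos⟩ := sin_half_ne_zero_and_cos_half_ne_zero hx
  exact tan_eq_sin_div_cos (x / 2) ▸ div_ne_zero hsin hcos

lemma hasDerivAt_sinMulLogTanPrimitive {φ θ : ℝ} (h : sin (θ + φ) ≠ 0) :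
    HasDerivAt (sinMulLogTanPrimitive φ) (sin θ * log (tan ((θ + φ) / 2))) θ := by
  obtain ⟨hsin, hcos⟩ := sin_half_ne_zero_and_cos_half_ne_zero h
  have hα : HasDerivAt (fun t : ℝ => (t + φ) / 2) (1 / 2) θ :=
    ((hasDerivAt_id θ).add_const φ).div_const 2
  have hβ : HasDerivAt (fun t : ℝ => (t - φ) / 2) (1 / 2) θ :=
    ((hasDerivAt_id θ).sub_const φ).div_const 2
  have hsinLog := (hasDerivAt_mul_log hsin).comp θ hα.sin
  have hcosLog := (hasDerivAt_mul_log hcos).comp θ hα.cos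
  refine ((((hβ.sin.mul hsinLog).add (hβ.cos.mul hcosLog)).const_mul 2).add
    ((hasDerivAt_id θ).mul_const (sin φ))).congr_deriv ?_
  have hθ : sin θ = sin ((θ + φ) / 2) * cos ((θ - φ) / 2)
      + cos ((θ + φ) / 2) * sin ((θ - φ) / 2) := by
    rw [← sin_add]; ring_nf
  have hφ : sin φ = sin ((θ + φ) / 2) * cos ((θ - φ) / 2)
      - cos ((θ + φ) / 2) * sin ((θ - φ) / 2) := by
    rw [← sin_sub]; ring_nf
  rw [tan_eq_sin_div_cos, log_div hsin hcos, hθ, hφ]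
  simp only [Function.comp_apply]
  ring

lemma countable_setOf_sin_add_eq_zero (φ : ℝ) : {θ : ℝ | sin (θ + φ) = 0}.Countable := by
  refine (countable_range fun n : ℤ => n * π - φ).mono fun θ hθ => ?_
  obtain ⟨n, hn⟩ := sin_eq_zero_iff.mp hθ
  exact ⟨n, sub_eq_of_eq_add hn⟩

lemma intervalIntegrable_sin_mul_log_tan (φ a b : ℝ) :
    IntervalIntegrable (fun θ => sin θ * log (tan ((θ + φ) / 2))) volume a b := by
  have htan : MeromorphicOn (fun θ : ℝ => tan ((θ + φ) / 2)) (uIcc a b) := by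
    simp only [tan_eq_sin_div_cos]
    intro θ _
    fun_prop
  exact htan.intervalIntegrable_log.continuousOn_mul continuous_sin.continuousOn

lemma integral_sin_mul_log_tan (φ a b : ℝ) :
    ∫ θ in a..b, sin θ * log (tan ((θ + φ) / 2))
      = sinMulLogTanPrimitive φ b - sinMulLogTanPrimitive φ a :=
  integral_eq_of_hasDerivAt_off_countable _ _ (countable_setOf_sin_add_eq_zero φ)
    (continuous_sinMulLogTanPrimitive φ).continuousOn
    (fun _ hθ => hasDerivAt_sinMulLogTanPrimitive hθ.2)
    (intervalIntegrable_sin_mul_log_tan φ a b)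

lemma sinMulLogTanPrimitive_neg_zero (φ : ℝ) :
    sinMulLogTanPrimitive (-φ) 0 = sinMulLogTanPrimitive φ 0 := by
  simp [sinMulLogTanPrimitive, neg_div]

lemma sinMulLogTanPrimitive_pi_div_two_sub_neg (φ : ℝ) :
    sinMulLogTanPrimitive φ (π / 2) - sinMulLogTanPrimitive (-φ) (π / 2) = π * sin φ := by
  have hcompl : (π / 2 + φ) / 2 = π / 2 - (π / 2 - φ) / 2 := by ring
  simp only [sinMulLogTanPrimitive, sub_neg_eq_add, ← sub_eq_add_neg, hcompl,
    sin_pi_div_two_sub, cos_pi_div_two_sub, sin_neg]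
  ring

lemma sin_add_sin_div_sin_sub_sin (x y : ℝ) :
    (sin x + sin y) / (sin x - sin y) = tan ((x + y) / 2) / tan ((x - y) / 2) := by
  rw [sin_add_sin, sin_sub_sin, tan_eq_sin_div_cos, tan_eq_sin_div_cos, div_div_div_eq,
    mul_assoc, mul_assoc, mul_div_mul_left _ _ two_ne_zero, mul_comm (cos ((x + y) / 2))]

lemma log_sin_add_sin_div_sin_sub_sin {x y : ℝ} (hadd : sin (x + y) ≠ 0)
    (hsub : sin (x - y) ≠ 0) :
    log ((sin x + sin y) / (sin x - sin y))
      = log (tan ((x + y) / 2)) - log (tan ((x - y) / 2)) := by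
  rw [sin_add_sin_div_sin_sub_sin, log_div (tan_half_ne_zero hadd) (tan_half_ne_zero hsub)]

lemma integral_sin_mul_log_sin_add_sin_div_sin_sub_sin (φ : ℝ) :
    ∫ θ in 0..π / 2, sin θ * log ((sin θ + sin φ) / (sin θ - sin φ)) = π * sin φ := by
  have hsplit : ∀ᵐ θ : ℝ, sin θ * log ((sin θ + sin φ) / (sin θ - sin φ))
      = sin θ * log (tan ((θ + φ) / 2)) - sin θ * log (tan ((θ + -φ) / 2)) := by
    filter_upwards [(countable_setOf_sin_add_eq_zero φ).ae_notMem volume,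
      (countable_setOf_sin_add_eq_zero (-φ)).ae_notMem volume] with θ hadd hsub
    rw [← mul_sub, ← sub_eq_add_neg]
    exact congrArg _ (log_sin_add_sin_div_sin_sub_sin hadd (sub_eq_add_neg θ φ ▸ hsub))
  rw [intervalIntegral.integral_congr_ae (hsplit.mono fun _ h _ => h),
    intervalIntegral.integral_sub (intervalIntegrable_sin_mul_log_tan _ _ _)
      (intervalIntegrable_sin_mul_log_tan _ _ _),
    integral_sin_mul_log_tan, integral_sin_mul_log_tan, sinMulLogTanPrimitive_neg_zero,
    sub_sub_sub_cancel_right, sinMulLogTanPrimitive_pi_div_two_sub_neg]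

lemma sqrt_sq_sub_mul_sin_sq {r θ : ℝ} (hr : 0 ≤ r) (hθ : 0 ≤ cos θ) :
    √(r ^ 2 - (r * sin θ) ^ 2) = r * cos θ := by
  rw [← sqrt_sq (mul_nonneg hr hθ)]
  congr 1
  linear_combination -r ^ 2 * sin_sq_add_cos_sq θ

lemma integral_inv_sqrt_sq_sub_sq_smul {E : Type*} [NormedAddCommGroup E] [NormedSpace ℝ E]
    {r a b : ℝ} (hr : 0 < r) (ha : a ∈ Icc (-(π / 2)) (π / 2)) (hb : b ∈ Icc (-(π / 2)) (π / 2))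
    (f : ℝ → E) :
    ∫ μ in r * sin a..r * sin b, (√(r ^ 2 - μ ^ 2))⁻¹ • f μ = ∫ θ in a..b, f (r * sin θ) := by
  have hcos : ∀ θ ∈ uIoo a b, 0 < cos θ := fun θ hθ =>
    cos_pos_of_mem_Ioo ⟨(le_min ha.1 hb.1).trans_lt hθ.1, hθ.2.trans_le (max_le ha.2 hb.2)⟩
  rw [← intervalIntegral.integral_deriv_smul_comp_of_deriv_nonneg
    (f := fun θ => r * sin θ) (f' := fun θ => r * cos θ) (by fun_prop)
    (fun θ _ => (hasDerivAt_sin θ).const_mul r)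
    (fun θ hθ => mul_nonneg hr.le (hcos θ hθ).le)]
  refine intervalIntegral.integral_congr_uIoo fun θ hθ => ?_
  have hjac : r * cos θ ≠ 0 := (mul_pos hr (hcos θ hθ)).ne'
  simp only [Function.comp_apply, sqrt_sq_sub_mul_sin_sq hr.le (hcos θ hθ).le,
    smul_inv_smul₀ hjac]

lemma log_div_abs (x y : ℝ) : log (x / |y|) = log |x / y| := by
  rw [← log_abs, abs_div, abs_abs, abs_div]

end SolitonCondensate

open SolitonCondensate
theorem genus0_condensate_NDR_u_general {lam η : ℝ} (hlam : 0 < lam) (hη : |η| ≤ lam) :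
    ∫ μ in (0 : ℝ)..lam, log |(μ + η) / (μ - η)| * (μ / (π * √(lam ^ 2 - μ ^ 2))) = η := by
  obtain ⟨φ, -, hφ⟩ : η / lam ∈ sin '' Icc (-(π / 2)) (π / 2) :=
    surjOn_sin (abs_le.mp (by rwa [abs_div, abs_of_pos hlam, div_le_one hlam]))
  obtain rfl : lam * sin φ = η := by rw [hφ, mul_div_cancel₀ _ hlam.ne']
  calc ∫ μ in (0 : ℝ)..lam, log |(μ + lam * sin φ) / (μ - lam * sin φ)|
          * (μ / (π * √(lam ^ 2 - μ ^ 2)))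
      = ∫ μ in lam * sin 0..lam * sin (π / 2), (√(lam ^ 2 - μ ^ 2))⁻¹ •
          (π⁻¹ * μ * log ((μ + lam * sin φ) / (μ - lam * sin φ))) := by
        simp only [sin_zero, mul_zero, sin_pi_div_two, mul_one, log_abs, smul_eq_mul]
        congr! 2 with μ
        ring
    _ = ∫ θ in 0..π / 2, π⁻¹ * (lam * sin θ)
          * log ((lam * sin θ + lam * sin φ) / (lam * sin θ - lam * sin φ)) :=
        integral_inv_sqrt_sq_sub_sq_smul hlam ⟨by linarith [pi_pos], by linarith [pi_pos]⟩
          ⟨by linarith [pi_pos], le_rfl⟩ _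
    _ = π⁻¹ * lam * ∫ θ in 0..π / 2, sin θ * log ((sin θ + sin φ) / (sin θ - sin φ)) := by
        simp only [← mul_add, ← mul_sub, mul_div_mul_left _ _ hlam.ne', mul_assoc,
          intervalIntegral.integral_const_mul]
    _ = lam * sin φ := by
        rw [integral_sin_mul_log_sin_add_sin_div_sin_sub_sin]
        field_simp

/-- Genus-0 KdV soliton condensate NDR for the density of states:
for `0 < η < λ`, `∫₀^λ ln((μ+η)/|μ-η|) · μ/(π√(λ²-μ²)) dμ = η`. -/
theorem genus0_condensate_NDR_u (lam η : ℝ) (hlam : 0 < lam)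
    (hη0 : 0 < η) (hηlam : η < lam) :
    ∫ μ in (0:ℝ)..lam,
      Real.log ((μ + η) / |μ - η|) * (μ / (Real.pi * Real.sqrt (lam ^ 2 - μ ^ 2))) = η := by
  simpa only [log_div_abs] using
    genus0_condensate_NDR_u_general hlam ((abs_of_pos hη0).trans_le hηlam.le)
end

section
/- Let 0 < λ be a real number. For every η with 0 < η < λ, the spectral flux density of the genus-0 KdV soliton condensate, v(μ) = 6μ(2μ² − λ²)/(π·√(λ² − μ²)) on (0, λ), satisfies the nonlinear dispersion relation ∫₀^λ ln((μ + η)/|μ − η|) · 6μ(2μ² − λ²)/(π·√(λ² − μ²)) dμ = 4η³. -/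
/-!
On `[-1, 1]` with the weight `1 / √(1 - y²)`, the Chebyshev polynomials diagonalize the
logarithmic kernel: `∫ log |y - x| T_n(y) / √(1 - y²) dy = -(π / n) T_n(x)` for `n ≥ 1`. With
`y = cos θ` and `x = cos φ`, the kernel is
`log 2 + log |sin ((θ - φ) / 2)| + log |sin ((θ + φ) / 2)|`, so this is the computation of the
Fourier coefficients of `log |sin (t / 2)|`. These follow by parts, since the derivative
`cot (t / 2) / 2` multiplied by `sin (n t)` is a trigonometric polynomial with mean `1 / 2`.

The flux density is odd, so the integral over `[0, λ]` against `log ((μ + η) / |μ - η|)` is the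
integral over `[-λ, λ]` against `-log |μ - η|`. For `λ = 1` the density is
`(3 / π) (T₃ + T₁) / √(1 - y²)`, which yields `T₃(x) + 3 T₁(x) = 4 x³`; the general case follows
by scaling.

In Lean `Real.log x` is `log |x|`, so most absolute values inside logarithms are omitted below.
-/

open Real MeasureTheory Set Polynomial.Chebyshev

/-- Zygmund's modified Dirichlet kernel `2⁻¹ sin (n t) cot (t / 2)`, as the cosine sum
`1 / 2 + cos t + ⋯ + cos ((n - 1) t) + cos (n t) / 2` so that it is also defined where
`sin (t / 2) = 0`. -/
noncomputable def modifiedDirichletKernel (n : ℕ) (t : ℝ) : ℝ :=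
  ∑ k ∈ Finset.range n, (cos (k * t) + cos ((k + 1 : ℕ) * t)) / 2

lemma continuous_modifiedDirichletKernel (n : ℕ) : Continuous (modifiedDirichletKernel n) := by
  unfold modifiedDirichletKernel
  fun_prop

lemma two_mul_sin_half_mul_modifiedDirichletKernel (n : ℕ) (t : ℝ) :
    2 * sin (t / 2) * modifiedDirichletKernel n t = cos (t / 2) * sin (n * t) := by
  unfold modifiedDirichletKernel
  induction n with
  | zero => simp
  | succ n ih =>
    have hdiff : sin ((n + 1 : ℕ) * t) - sin (n * t) =
        2 * sin (t / 2) * cos (n * t + t / 2) := by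
      rw [sin_sub_sin]
      congr 3 <;> push_cast <;> ring
    have hsum : cos (n * t) + cos ((n + 1 : ℕ) * t) =
        2 * cos (n * t + t / 2) * cos (t / 2) := by
      rw [add_comm, cos_add_cos]
      congr 3 <;> push_cast <;> ring
    rw [Finset.sum_range_succ, mul_add, ih, hsum]
    linear_combination -cos (t / 2) * hdiff

lemma integral_cos_nat_mul {n : ℕ} (hn : n ≠ 0) (b : ℝ) :
    ∫ t in 0..b, cos (n * t) = sin (n * b) / n := by
  rw [intervalIntegral.integral_comp_mul_left _ (Nat.cast_ne_zero.2 hn), integral_cos, mul_zero,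
    sin_zero, sub_zero, smul_eq_mul, inv_mul_eq_div]

lemma integral_modifiedDirichletKernel {n : ℕ} (hn : n ≠ 0) :
    ∫ t in 0..2 * π, modifiedDirichletKernel n t = π := by
  have hint (k : ℕ) : IntervalIntegrable (fun t ↦ cos (k * t)) volume 0 (2 * π) :=
    Continuous.intervalIntegrable (by fun_prop) _ _
  have hzero {k : ℕ} (hk : k ≠ 0) : ∫ t in 0..2 * π, cos (k * t) = 0 := by
    rw [integral_cos_nat_mul hk, sin_periodic.nat_mul_eq, sin_zero, zero_div]
  unfold modifiedDirichletKernel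
  rw [intervalIntegral.integral_finsetSum fun k _ ↦ ((hint k).add (hint (k + 1))).div_const 2,
    Finset.sum_eq_single_of_mem 0 (Finset.mem_range.2 hn.bot_lt)]
  · rw [intervalIntegral.integral_div, intervalIntegral.integral_add (hint 0) (hint (0 + 1)),
      hzero (Nat.succ_ne_zero 0)]
    simp
  · intro k _ hk
    rw [intervalIntegral.integral_div, intervalIntegral.integral_add (hint k) (hint (k + 1)),
      hzero hk, hzero k.succ_ne_zero, add_zero, zero_div]

lemma intervalIntegrable_log_mul {f g : ℝ → ℝ} (hf : ∀ t, AnalyticAt ℝ f t) (hg : Continuous g)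
    (a b : ℝ) : IntervalIntegrable (fun t ↦ log (f t) * g t) volume a b :=
  (MeromorphicOn.intervalIntegrable_log fun t _ ↦ (hf t).meromorphicAt).mul_continuousOn
    hg.continuousOn

lemma continuous_log_sin_half_mul_sin_nat_mul (n : ℕ) :
    Continuous fun t ↦ log (sin (t / 2)) * sin (n * t) := by
  -- `sin (n * t)` is divisible by `sin (t / 2)`, and `x * log x` is continuous at `0`.
  have hfactor (t : ℝ) : log (sin (t / 2)) * sin (n * t) =
      sin (t / 2) * log (sin (t / 2)) * (2 * cos (t / 2) * (U ℝ (n - 1)).eval (cos t)) := by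
    have hU := U_real_cos t (n - 1)
    have hdouble : sin t = 2 * sin (t / 2) * cos (t / 2) := by
      rw [← sin_two_mul, mul_div_cancel₀ t two_ne_zero]
    push_cast at hU
    rw [sub_add_cancel] at hU
    rw [← hU, hdouble]
    ring
  simp only [hfactor]
  exact (continuous_mul_log.comp (by fun_prop : Continuous fun t : ℝ ↦ sin (t / 2))).mul
    (by fun_prop)

lemma hasDerivAt_log_sin_half_mul_sin_nat_mul (n : ℕ) {t : ℝ} (ht : sin (t / 2) ≠ 0) :
    HasDerivAt (fun t ↦ log (sin (t / 2)) * sin (n * t))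
      (n * (log (sin (t / 2)) * cos (n * t)) + modifiedDirichletKernel n t) t := by
  have hlog := ((hasDerivAt_id' t).div_const 2).sin.log ht
  have hsin := ((hasDerivAt_id' t).const_mul (n : ℝ)).sin
  refine (hlog.mul hsin).congr_deriv ?_
  have hkernel : modifiedDirichletKernel n t = cos (t / 2) * sin (n * t) / (2 * sin (t / 2)) := by
    rw [← two_mul_sin_half_mul_modifiedDirichletKernel, mul_div_cancel_left₀]
    exact mul_ne_zero two_ne_zero ht
  rw [hkernel]
  ring

lemma integral_log_sin_half_mul_cos_nat_mul {n : ℕ} (hn : n ≠ 0) :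
    ∫ t in 0..2 * π, log (sin (t / 2)) * cos (n * t) = -(π / n) := by
  have hlog : IntervalIntegrable (fun t ↦ n * (log (sin (t / 2)) * cos (n * t)))
      volume 0 (2 * π) :=
    (intervalIntegrable_log_mul (by fun_prop) (by fun_prop) _ _).const_mul _
  have hkernel : IntervalIntegrable (modifiedDirichletKernel n) volume 0 (2 * π) :=
    (continuous_modifiedDirichletKernel n).intervalIntegrable _ _
  have hftc := intervalIntegral.integral_eq_sub_of_hasDerivAt_of_le two_pi_pos.le
    (continuous_log_sin_half_mul_sin_nat_mul n).continuousOn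
    (fun t ht ↦ hasDerivAt_log_sin_half_mul_sin_nat_mul n
      (sin_pos_of_pos_of_lt_pi (by linarith [ht.1]) (by linarith [ht.2])).ne')
    (hlog.add hkernel)
  rw [intervalIntegral.integral_add hlog hkernel, intervalIntegral.integral_const_mul,
    integral_modifiedDirichletKernel hn, mul_div_cancel_left₀ π two_ne_zero, sin_pi, zero_div,
    sin_zero, log_zero, zero_mul, zero_mul, sub_zero] at hftc
  rw [← neg_div, eq_div_iff (Nat.cast_ne_zero.2 hn)]
  linarith

lemma integral_log_sin_half_mul_sin_nat_mul (n : ℕ) :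
    ∫ t in 0..2 * π, log (sin (t / 2)) * sin (n * t) = 0 := by
  have hreflect (t : ℝ) : log (sin ((2 * π - t) / 2)) * sin (n * (2 * π - t)) =
      -(log (sin (t / 2)) * sin (n * t)) := by
    rw [show (2 * π - t) / 2 = π - t / 2 by ring, sin_pi_sub, mul_sub, sin_nat_mul_two_pi_sub,
      mul_neg]
  have h := intervalIntegral.integral_comp_sub_left (a := 0) (b := 2 * π)
    (fun t ↦ log (sin (t / 2)) * sin (n * t)) (2 * π)
  simp only [hreflect, intervalIntegral.integral_neg, sub_self, sub_zero] at h
  linarith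

lemma periodic_log_sin_half : Function.Periodic (fun t ↦ log (sin (t / 2))) (2 * π) := fun t ↦ by
  beta_reduce
  rw [show (t + 2 * π) / 2 = t / 2 + π by ring, sin_add_pi, log_neg_eq_log]

lemma integral_log_sin_half_sub_mul_cos_nat_mul {n : ℕ} (hn : n ≠ 0) (φ : ℝ) :
    ∫ θ in -π..π, log (sin ((θ - φ) / 2)) * cos (n * θ) = -(π / n) * cos (n * φ) := by
  have hperiodic : Function.Periodic (fun t ↦ log (sin (t / 2)) * cos (n * (t + φ))) (2 * π) :=
    periodic_log_sin_half.mul fun t ↦ by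
      rw [show (n : ℝ) * (t + 2 * π + φ) = n * (t + φ) + n * (2 * π) by ring,
        cos_add_nat_mul_two_pi]
  have hint {g : ℝ → ℝ} (hg : Continuous g) :
      IntervalIntegrable (fun t ↦ log (sin (t / 2)) * g t) volume 0 (2 * π) :=
    intervalIntegrable_log_mul (by fun_prop) hg _ _
  calc ∫ θ in -π..π, log (sin ((θ - φ) / 2)) * cos (n * θ)
    _ = ∫ t in -π - φ..π - φ, log (sin (t / 2)) * cos (n * (t + φ)) := by
      rw [← intervalIntegral.integral_comp_sub_right]
      simp only [sub_add_cancel]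
    _ = ∫ t in 0..2 * π, log (sin (t / 2)) * cos (n * (t + φ)) := by
      have h := hperiodic.intervalIntegral_add_eq (-π - φ) 0
      rwa [zero_add, show -π - φ + 2 * π = π - φ by ring] at h
    _ = ∫ t in 0..2 * π, (cos (n * φ) * (log (sin (t / 2)) * cos (n * t)) -
          sin (n * φ) * (log (sin (t / 2)) * sin (n * t))) := by
      congr with t
      rw [mul_add, cos_add]
      ring
    _ = -(π / n) * cos (n * φ) := by
      rw [intervalIntegral.integral_sub ((hint (by fun_prop)).const_mul _)
          ((hint (by fun_prop)).const_mul _), intervalIntegral.integral_const_mul,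
        intervalIntegral.integral_const_mul, integral_log_sin_half_mul_cos_nat_mul hn,
        integral_log_sin_half_mul_sin_nat_mul]
      ring

lemma ae_sin_half_add_ne_zero (c : ℝ) : ∀ᵐ θ : ℝ, sin ((θ + c) / 2) ≠ 0 := by
  have hzeros : {θ | sin ((θ + c) / 2) = 0} ⊆ range fun k : ℤ ↦ 2 * (k * π) - c := by
    intro θ hθ
    obtain ⟨k, hk⟩ := sin_eq_zero_iff.1 hθ
    exact ⟨k, by linarith⟩
  exact ((countable_range _).mono hzeros).ae_notMem volume

lemma log_cos_sub_cos_ae_eq (φ : ℝ) :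
    ∀ᵐ θ : ℝ, log (cos θ - cos φ) =
      log (sin ((θ - φ) / 2)) + log (sin ((θ + φ) / 2)) + log 2 := by
  filter_upwards [ae_sin_half_add_ne_zero φ, ae_sin_half_add_ne_zero (-φ)] with θ hadd hsub
  rw [← sub_eq_add_neg] at hsub
  rw [cos_sub_cos, log_mul (mul_ne_zero (by norm_num) hadd) hsub, log_mul (by norm_num) hadd,
    log_neg_eq_log]
  ring

lemma integral_log_sin_half_add_mul_cos_nat_mul (n : ℕ) (φ : ℝ) :
    ∫ θ in 0..π, log (sin ((θ + φ) / 2)) * cos (n * θ) =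
      ∫ θ in -π..0, log (sin ((θ - φ) / 2)) * cos (n * θ) := by
  have hreflect (θ : ℝ) : log (sin ((-θ - φ) / 2)) * cos (n * -θ) =
      log (sin ((θ + φ) / 2)) * cos (n * θ) := by
    rw [← neg_add', neg_div, sin_neg, log_neg_eq_log, mul_neg, cos_neg]
  rw [← neg_zero, ← intervalIntegral.integral_comp_neg, neg_zero]
  simp only [hreflect]

lemma integral_log_cos_sub_cos_mul_cos_nat_mul {n : ℕ} (hn : n ≠ 0) (φ : ℝ) :
    ∫ θ in 0..π, log (cos θ - cos φ) * cos (n * θ) = -(π / n) * cos (n * φ) := by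
  have hsub (a b : ℝ) : IntervalIntegrable (fun θ ↦ log (sin ((θ - φ) / 2)) * cos (n * θ))
      volume a b :=
    intervalIntegrable_log_mul (by fun_prop) (by fun_prop) a b
  have hadd : IntervalIntegrable (fun θ ↦ log (sin ((θ + φ) / 2)) * cos (n * θ)) volume 0 π :=
    intervalIntegrable_log_mul (by fun_prop) (by fun_prop) 0 π
  have hcos : ∫ θ in 0..π, cos (n * θ) = 0 := by
    rw [integral_cos_nat_mul hn, sin_nat_mul_pi, zero_div]
  calc ∫ θ in 0..π, log (cos θ - cos φ) * cos (n * θ)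
    _ = ∫ θ in 0..π, (log (sin ((θ - φ) / 2)) * cos (n * θ) +
          log (sin ((θ + φ) / 2)) * cos (n * θ) + log 2 * cos (n * θ)) := by
      refine intervalIntegral.integral_congr_ae ?_
      filter_upwards [log_cos_sub_cos_ae_eq φ] with θ hθ _
      rw [hθ]
      ring
    _ = (∫ θ in -π..0, log (sin ((θ - φ) / 2)) * cos (n * θ)) +
          ∫ θ in 0..π, log (sin ((θ - φ) / 2)) * cos (n * θ) := by
      rw [intervalIntegral.integral_add ((hsub _ _).add hadd)
          (Continuous.intervalIntegrable (by fun_prop) _ _),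
        intervalIntegral.integral_add (hsub _ _) hadd, intervalIntegral.integral_const_mul, hcos,
        integral_log_sin_half_add_mul_cos_nat_mul, mul_zero, add_zero, add_comm]
    _ = -(π / n) * cos (n * φ) := by
      rw [intervalIntegral.integral_add_adjacent_intervals (hsub _ _) (hsub _ _),
        integral_log_sin_half_sub_mul_cos_nat_mul hn]

lemma intervalIntegrable_mul_inv_sqrt_one_sub_sq_iff {f : ℝ → ℝ} :
    IntervalIntegrable (fun x ↦ f x * (√(1 - x ^ 2))⁻¹) volume (-1) 1 ↔
      IntervalIntegrable (fun θ ↦ f (cos θ)) volume 0 π := by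
  have hsubst := integrableOn_Icc_deriv_smul_iff_of_deriv_nonpos (g := fun θ ↦ f (cos θ))
    continuous_arccos.continuousOn
    (fun x hx ↦ hasDerivAt_arccos (x := x) (ne_of_gt hx.1) (ne_of_lt hx.2))
    (fun x _ ↦ neg_nonpos.2 (by positivity)) (by norm_num : (-1 : ℝ) ≤ 1)
  rw [arccos_one, arccos_neg_one] at hsubst
  rw [intervalIntegrable_iff_integrableOn_Icc_of_le (by norm_num),
    intervalIntegrable_iff_integrableOn_Icc_of_le pi_nonneg, ← hsubst, IntegrableOn,
    ← integrable_neg_iff]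
  refine integrableOn_congr_fun (fun x hx ↦ ?_) measurableSet_Icc
  simp [cos_arccos hx.1 hx.2, mul_comm]

lemma intervalIntegrable_log_sub_mul_inv_sqrt_one_sub_sq {f : ℝ → ℝ}
    (hf : Continuous f) (x : ℝ) :
    IntervalIntegrable (fun y ↦ log (y - x) * f y * (√(1 - y ^ 2))⁻¹) volume (-1) 1 :=
  intervalIntegrable_mul_inv_sqrt_one_sub_sq_iff.2 <|
    intervalIntegrable_log_mul (by fun_prop) (by fun_prop) 0 π

lemma integral_log_sub_mul_eval_T_mul_inv_sqrt {n : ℕ} (hn : n ≠ 0) {x : ℝ}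
    (hx : x ∈ Icc (-1) 1) :
    ∫ y in -1..1, log (y - x) * (T ℝ n).eval y * (√(1 - y ^ 2))⁻¹ =
      -(π / n) * (T ℝ n).eval x := by
  simp only [← sqrt_inv]
  rw [← integral_measureT, integral_measureT_eq_integral_cos, ← cos_arccos hx.1 hx.2]
  simp only [T_real_cos, Int.cast_natCast]
  exact integral_log_cos_sub_cos_mul_cos_nat_mul hn _

lemma integral_log_div_abs_mul_of_odd {w : ℝ → ℝ} (hw : Function.Odd w) {a x : ℝ}
    (hint : IntervalIntegrable (fun y ↦ log (y - x) * w y) volume (-a) a) :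
    ∫ y in 0..a, log ((y + x) / |y - x|) * w y = -∫ y in -a..a, log (y - x) * w y := by
  have hzero : (0 : ℝ) ∈ uIcc (-a) a := by
    rcases le_total 0 a with ha | ha <;> simp [ha]
  have hneg := hint.mono_set (uIcc_subset_uIcc_left hzero)
  have hpos := hint.mono_set (uIcc_subset_uIcc_right hzero)
  have hlog_add (y : ℝ) : log (-y - x) * w (-y) = -(log (y + x) * w y) := by
    rw [hw, ← neg_add', log_neg_eq_log, mul_neg]
  have hreflect : ∫ y in -a..0, log (y - x) * w y = -∫ y in 0..a, log (y + x) * w y := by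
    rw [← neg_zero, ← intervalIntegral.integral_comp_neg, neg_zero]
    simp only [hlog_add, intervalIntegral.integral_neg]
  have hadd : IntervalIntegrable (fun y ↦ log (y + x) * w y) volume 0 a := by
    have h := ((IntervalIntegrable.iff_comp_neg enorm_ne_top).1 hneg).neg.symm
    simpa [hlog_add, Pi.neg_def] using h
  have hlog : ∫ y in 0..a, log ((y + x) / |y - x|) * w y =
      ∫ y in 0..a, (log (y + x) * w y - log (y - x) * w y) := by
    refine intervalIntegral.integral_congr_ae ?_
    filter_upwards [Measure.ae_ne volume x, Measure.ae_ne volume (-x)] with y hsub hadd _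
    rw [log_div (by simpa [add_eq_zero_iff_eq_neg] using hadd)
      (abs_ne_zero.2 (sub_ne_zero.2 hsub)), log_abs, sub_mul]
  rw [hlog, intervalIntegral.integral_sub hadd hpos,
    ← intervalIntegral.integral_add_adjacent_intervals hneg hpos, hreflect]
  ring

/-- The spectral flux density `v⁽⁰⁾(μ; lam)` of the genus-0 condensate with spectral support
`[0, lam]`, extended to an odd function of `μ` by the same formula. -/
noncomputable def condensateFlux (lam μ : ℝ) : ℝ :=
  6 * μ * (2 * μ ^ 2 - lam ^ 2) / (π * √(lam ^ 2 - μ ^ 2))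

lemma odd_condensateFlux (lam : ℝ) : Function.Odd (condensateFlux lam) := fun μ ↦ by
  simp only [condensateFlux, neg_sq]
  ring

lemma condensateFlux_mul {lam : ℝ} (hlam : 0 < lam) (y : ℝ) :
    condensateFlux lam (lam * y) = lam ^ 2 * condensateFlux 1 y := by
  have hsqrt : √(lam ^ 2 - (lam * y) ^ 2) = lam * √(1 ^ 2 - y ^ 2) := by
    rw [mul_pow, one_pow, ← mul_one_sub, sqrt_mul (sq_nonneg lam), sqrt_sq hlam.le]
  rw [condensateFlux, condensateFlux, hsqrt]
  field_simp

lemma eval_T_three (y : ℝ) : (T ℝ 3).eval y = 4 * y ^ 3 - 3 * y := by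
  rw [show (3 : ℤ) = 1 + 2 by norm_num, T_add_two]
  norm_num [T_two, T_one]
  ring

lemma condensateFlux_one_eq_eval_T (y : ℝ) :
    condensateFlux 1 y = 3 / π * ((T ℝ 3).eval y + (T ℝ 1).eval y) * (√(1 - y ^ 2))⁻¹ := by
  rw [condensateFlux, eval_T_three, T_one, Polynomial.eval_X, div_mul_eq_div_div,
    div_eq_mul_inv _ √_, one_pow]
  ring

lemma intervalIntegrable_log_sub_mul_condensateFlux_one (x : ℝ) :
    IntervalIntegrable (fun y ↦ log (y - x) * condensateFlux 1 y) volume (-1) 1 := by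
  have h := intervalIntegrable_log_sub_mul_inv_sqrt_one_sub_sq
    (f := fun y ↦ 3 / π * ((T ℝ 3).eval y + (T ℝ 1).eval y)) (by fun_prop) x
  simpa only [condensateFlux_one_eq_eval_T, mul_assoc] using h

lemma integral_log_sub_mul_condensateFlux_one {x : ℝ} (hx : x ∈ Icc (-1) 1) :
    ∫ y in -1..1, log (y - x) * condensateFlux 1 y = -(4 * x ^ 3) := by
  have hint (n : ℤ) := intervalIntegrable_log_sub_mul_inv_sqrt_one_sub_sq
    (T ℝ n).continuous x
  have hT₁ : ∫ y in -1..1, log (y - x) * (T ℝ 1).eval y * (√(1 - y ^ 2))⁻¹ =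
      -(π / 1) * (T ℝ 1).eval x :=
    mod_cast integral_log_sub_mul_eval_T_mul_inv_sqrt one_ne_zero hx
  have hT₃ : ∫ y in -1..1, log (y - x) * (T ℝ 3).eval y * (√(1 - y ^ 2))⁻¹ =
      -(π / 3) * (T ℝ 3).eval x :=
    mod_cast integral_log_sub_mul_eval_T_mul_inv_sqrt three_ne_zero hx
  calc ∫ y in -1..1, log (y - x) * condensateFlux 1 y
    _ = ∫ y in -1..1, 3 / π * (log (y - x) * (T ℝ 3).eval y * (√(1 - y ^ 2))⁻¹ +
          log (y - x) * (T ℝ 1).eval y * (√(1 - y ^ 2))⁻¹) := by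
      congr with y
      rw [condensateFlux_one_eq_eval_T]
      ring
    _ = 3 / π * (-(π / 3) * (T ℝ 3).eval x + -(π / 1) * (T ℝ 1).eval x) := by
      rw [intervalIntegral.integral_const_mul, intervalIntegral.integral_add (hint 3) (hint 1),
        hT₃, hT₁]
    _ = -(4 * x ^ 3) := by
      rw [eval_T_three, T_one, Polynomial.eval_X]
      field_simp
      ring

lemma integral_log_div_abs_mul_condensateFlux_one {x : ℝ} (hx : x ∈ Icc (-1) 1) :
    ∫ y in 0..1, log ((y + x) / |y - x|) * condensateFlux 1 y = 4 * x ^ 3 := by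
  rw [integral_log_div_abs_mul_of_odd (odd_condensateFlux 1)
      (intervalIntegrable_log_sub_mul_condensateFlux_one x),
    integral_log_sub_mul_condensateFlux_one hx, neg_neg]

/-- Genus-0 KdV soliton condensate NDR for the spectral flux density:
for `0 < η < λ`, `∫₀^λ ln((μ+η)/|μ-η|) · 6μ(2μ²-λ²)/(π√(λ²-μ²)) dμ = 4η³`. -/
theorem genus0_condensate_NDR_v (lam η : ℝ) (hlam : 0 < lam)
    (hη0 : 0 < η) (hηlam : η < lam) :
    ∫ μ in (0:ℝ)..lam,
      Real.log ((μ + η) / |μ - η|) *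
        (6 * μ * (2 * μ ^ 2 - lam ^ 2) / (Real.pi * Real.sqrt (lam ^ 2 - μ ^ 2))) =
      4 * η ^ 3 := by
  obtain ⟨x, rfl⟩ : ∃ x, η = lam * x := ⟨η / lam, (mul_div_cancel₀ η hlam.ne').symm⟩
  have hx : x ∈ Icc (-1) 1 := ⟨by nlinarith, by nlinarith⟩
  have hscale (y : ℝ) : log ((lam * y + lam * x) / |lam * y - lam * x|) *
      condensateFlux lam (lam * y) = lam ^ 2 * (log ((y + x) / |y - x|) * condensateFlux 1 y) := by
    rw [condensateFlux_mul hlam, ← mul_add, ← mul_sub, abs_mul, abs_of_pos hlam,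
      mul_div_mul_left _ _ hlam.ne']
    ring
  calc ∫ μ in 0..lam, log ((μ + lam * x) / |μ - lam * x|) * condensateFlux lam μ
    _ = lam * ∫ y in 0..1, log ((lam * y + lam * x) / |lam * y - lam * x|) *
          condensateFlux lam (lam * y) := by
      rw [intervalIntegral.mul_integral_comp_mul_left (f := fun μ ↦
        log ((μ + lam * x) / |μ - lam * x|) * condensateFlux lam μ), mul_zero, mul_one]
    _ = lam * (lam ^ 2 * (4 * x ^ 3)) := by
      simp only [hscale]
      rw [intervalIntegral.integral_const_mul, integral_log_div_abs_mul_condensateFlux_one hx]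
    _ = 4 * (lam * x) ^ 3 := by ring
end

section
/- Let 0 < λ and let η ∈ (−λ, λ). Then the principal-value integral lim_{ε→0⁺} [ ∫_{−λ}^{η−ε} μ/((μ − η)·√(λ² − μ²)) dμ + ∫_{η+ε}^{λ} μ/((μ − η)·√(λ² − μ²)) dμ ] exists and equals π. Equivalently, the finite Hilbert transform of the odd extension of the genus-0 condensate density of states u(μ) = μ/(π·√(λ² − μ²)) equals the constant 1/π on (−λ, λ). -/
/-!
Write `s(μ) = √(λ² - μ²)`. Since `μ / (μ - η) = 1 + η / (μ - η)`, the integrand splits as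
`1 / s(μ) + η / ((μ - η) s(μ))`. The first term is integrable with integral `π`, and the second has
principal value `0`: up to the constant `1 / s(η)`, the kernel `1 / ((μ - η) s(μ))` has the
primitive `log |(μ - η) / (λ² - ημ + s(η) s(μ))|`, whose values at `λ` and `-λ` are both `-log λ`
and whose singularity at `η` is the even function `log |μ - η|`, which cancels in the symmetric
limit. (For `μ = λ sin α` and `η = λ sin β` the quotient is
`sin ((α - β) / 2) / (λ cos ((α + β) / 2))`.)
-/

section PrincipalValue

open Set Filter Topology MeasureTheory intervalIntegral

variable {E : Type*} [NormedAddCommGroup E] [NormedSpace ℝ E]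
  {f g F G : ℝ → E} {a b c : ℝ} {u v k : E}

/-- The Cauchy principal value of `∫ x in a..b, f x` with respect to a singularity at `c` exists
and equals `v`. Integrability away from `c` is part of the notion, so that the truncated integrals
never take the junk value `0`. -/
structure HasPrincipalValue (f : ℝ → E) (a c b : ℝ) (v : E) : Prop where
  intervalIntegrable_left : ∀ x ∈ Ico a c, IntervalIntegrable f volume a x
  intervalIntegrable_right : ∀ x ∈ Ioc c b, IntervalIntegrable f volume x b
  tendsto : Tendsto (fun ε : ℝ => (∫ x in a..(c - ε), f x) + ∫ x in (c + ε)..b, f x)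
    (𝓝[>] 0) (𝓝 v)

lemma eventually_sub_mem_Ico (hac : a < c) : ∀ᶠ ε in 𝓝[>] 0, c - ε ∈ Ico a c := by
  filter_upwards [Ioc_mem_nhdsGT (sub_pos.mpr hac)] with ε hε
  exact ⟨by linarith [hε.2], by linarith [hε.1]⟩

lemma eventually_add_mem_Ioc (hcb : c < b) : ∀ᶠ ε in 𝓝[>] 0, c + ε ∈ Ioc c b := by
  filter_upwards [Ioc_mem_nhdsGT (sub_pos.mpr hcb)] with ε hε
  exact ⟨by linarith [hε.1], by linarith [hε.2]⟩

lemma tendsto_sub_sub_add_of_continuousAt {M : Type*} [TopologicalSpace M] [AddGroup M]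
    [ContinuousSub M] {h : ℝ → M} (hh : ContinuousAt h c) :
    Tendsto (fun ε : ℝ => h (c - ε) - h (c + ε)) (𝓝[>] 0) (𝓝 0) := by
  have hsub : ContinuousAt (fun ε : ℝ => h (c - ε)) 0 :=
    ContinuousAt.comp (by simpa using hh) (by fun_prop)
  have hadd : ContinuousAt (fun ε : ℝ => h (c + ε)) 0 :=
    ContinuousAt.comp (by simpa using hh) (by fun_prop)
  have hlim := Tendsto.sub hsub.tendsto hadd.tendsto
  rw [sub_zero, add_zero, sub_self] at hlim
  exact hlim.mono_left nhdsWithin_le_nhds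

namespace HasPrincipalValue

lemma add (hac : a < c) (hcb : c < b) (hf : HasPrincipalValue f a c b u)
    (hg : HasPrincipalValue g a c b v) :
    HasPrincipalValue (fun x => f x + g x) a c b (u + v) where
  intervalIntegrable_left x hx :=
    (hf.intervalIntegrable_left x hx).add (hg.intervalIntegrable_left x hx)
  intervalIntegrable_right x hx :=
    (hf.intervalIntegrable_right x hx).add (hg.intervalIntegrable_right x hx)
  tendsto := by
    refine (hf.tendsto.add hg.tendsto).congr' ?_
    filter_upwards [eventually_sub_mem_Ico hac, eventually_add_mem_Ioc hcb] with ε hl hr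
    rw [integral_add (hf.intervalIntegrable_left _ hl) (hg.intervalIntegrable_left _ hl),
      integral_add (hf.intervalIntegrable_right _ hr) (hg.intervalIntegrable_right _ hr)]
    abel

lemma const_smul (r : ℝ) (hf : HasPrincipalValue f a c b v) :
    HasPrincipalValue (fun x => r • f x) a c b (r • v) where
  intervalIntegrable_left x hx := (hf.intervalIntegrable_left x hx).smul r
  intervalIntegrable_right x hx := (hf.intervalIntegrable_right x hx).smul r
  tendsto := by simpa only [intervalIntegral.integral_smul, smul_add] using hf.tendsto.const_smul r

lemma congr (hac : a < c) (hcb : c < b) (hf : HasPrincipalValue f a c b v)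
    (hfg : EqOn f g (Icc a b \ {c})) : HasPrincipalValue g a c b v := by
  have hleft : ∀ x ∈ Ico a c, EqOn f g (uIcc a x) := fun x hx y hy => by
    rw [uIcc_of_le hx.1] at hy
    exact hfg ⟨⟨hy.1, (hy.2.trans_lt (hx.2.trans hcb)).le⟩, (hy.2.trans_lt hx.2).ne⟩
  have hright : ∀ x ∈ Ioc c b, EqOn f g (uIcc x b) := fun x hx y hy => by
    rw [uIcc_of_le hx.2] at hy
    exact hfg ⟨⟨((hac.trans hx.1).trans_le hy.1).le, hy.2⟩, (hx.1.trans_le hy.1).ne'⟩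
  refine ⟨fun x hx => (hf.intervalIntegrable_left x hx).congr
      ((hleft x hx).mono uIoc_subset_uIcc),
    fun x hx => (hf.intervalIntegrable_right x hx).congr
      ((hright x hx).mono uIoc_subset_uIcc), hf.tendsto.congr' ?_⟩
  filter_upwards [eventually_sub_mem_Ico hac, eventually_add_mem_Ioc hcb] with ε hl hr
  rw [integral_congr (hleft _ hl), integral_congr (hright _ hr)]

lemma of_integral_eq_sub (hac : a < c) (hcb : c < b)
    (hintl : ∀ x ∈ Ico a c, IntervalIntegrable f volume a x)
    (hintr : ∀ x ∈ Ioc c b, IntervalIntegrable f volume x b)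
    (hleft : ∀ x ∈ Ico a c, ∫ y in a..x, f y = F x - F a)
    (hright : ∀ x ∈ Ioc c b, ∫ y in x..b, f y = F b - F x)
    (hF : Tendsto (fun ε : ℝ => F (c - ε) - F (c + ε)) (𝓝[>] 0) (𝓝 0)) :
    HasPrincipalValue f a c b (F b - F a) := by
  refine ⟨hintl, hintr, ?_⟩
  rw [← add_zero (F b - F a)]
  refine (hF.const_add (F b - F a)).congr' ?_
  filter_upwards [eventually_sub_mem_Ico hac, eventually_add_mem_Ioc hcb] with ε hl hr
  rw [hleft _ hl, hright _ hr]
  abel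

lemma of_intervalIntegrable (hac : a < c) (hcb : c < b)
    (hf : IntervalIntegrable f volume a b) :
    HasPrincipalValue f a c b (∫ x in a..b, f x) := by
  have hab : a ≤ b := (hac.trans hcb).le
  have hleft : ∀ x ∈ Icc a b, IntervalIntegrable f volume a x := fun x hx =>
    hf.mono_set (uIcc_subset_uIcc_left (uIcc_of_le hab ▸ hx))
  have hright : ∀ x ∈ Icc a b, IntervalIntegrable f volume x b := fun x hx =>
    hf.mono_set (uIcc_subset_uIcc_right (uIcc_of_le hab ▸ hx))
  have hIco : Ico a c ⊆ Icc a b := fun x hx => ⟨hx.1, (hx.2.trans hcb).le⟩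
  have hIoc : Ioc c b ⊆ Icc a b := fun x hx => ⟨(hac.trans hx.1).le, hx.2⟩
  have hcont : ContinuousAt (fun x => ∫ y in a..x, f y) c :=
    (continuousOn_primitive_interval' hf left_mem_uIcc).continuousAt
      (uIcc_of_le hab ▸ Icc_mem_nhds hac hcb)
  simpa using of_integral_eq_sub (F := fun x => ∫ y in a..x, f y) hac hcb
    (fun x hx => hleft x (hIco hx)) (fun x hx => hright x (hIoc hx)) (fun x _ => by simp)
    (fun x hx => (integral_interval_sub_left hf (hleft x (hIoc hx))).symm)
    (tendsto_sub_sub_add_of_continuousAt hcont)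

lemma of_hasDerivAt_add_log [CompleteSpace E] (hac : a < c) (hcb : c < b)
    (hG : ContinuousOn G (Icc a b))
    (hderiv : ∀ x ∈ Ioo a b, x ≠ c →
      HasDerivAt (fun y => G y + Real.log (y - c) • k) (f x) x)
    (hintl : ∀ x ∈ Ico a c, IntervalIntegrable f volume a x)
    (hintr : ∀ x ∈ Ioc c b, IntervalIntegrable f volume x b) :
    HasPrincipalValue f a c b
      (G b + Real.log (b - c) • k - (G a + Real.log (a - c) • k)) := by
  have hcont : ContinuousOn (fun y => G y + Real.log (y - c) • k) (Icc a b \ {c}) :=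
    (hG.mono sdiff_subset).add (((continuousOn_id.sub continuousOn_const).log
      fun x hx => sub_ne_zero.mpr hx.2).smul continuousOn_const)
  refine of_integral_eq_sub (F := fun y => G y + Real.log (y - c) • k) hac hcb hintl hintr
    (fun x hx => ?_) (fun x hx => ?_) ?_
  · exact integral_eq_sub_of_hasDerivAt_of_le hx.1
      (hcont.mono fun y hy => ⟨⟨hy.1, (hy.2.trans_lt (hx.2.trans hcb)).le⟩,
        (hy.2.trans_lt hx.2).ne⟩)
      (fun y hy => hderiv y ⟨hy.1, hy.2.trans (hx.2.trans hcb)⟩ (hy.2.trans hx.2).ne)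
      (hintl x hx)
  · exact integral_eq_sub_of_hasDerivAt_of_le hx.2
      (hcont.mono fun y hy => ⟨⟨((hac.trans hx.1).trans_le hy.1).le, hy.2⟩,
        (hx.1.trans_le hy.1).ne'⟩)
      (fun y hy => hderiv y ⟨(hac.trans hx.1).trans hy.1, hy.2⟩ (hx.1.trans hy.1).ne')
      (hintr x hx)
  · -- `Real.log (-ε) = Real.log ε`, so the two logarithms cancel.
    simpa using tendsto_sub_sub_add_of_continuousAt
      (hG.continuousAt (Icc_mem_nhds hac hcb))

end HasPrincipalValue

end PrincipalValue

section ArcsineDensity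

open Set MeasureTheory Real

variable {r x η : ℝ}

lemma sq_sub_sq_pos_of_mem_Ioo (hx : x ∈ Ioo (-r) r) : 0 < r ^ 2 - x ^ 2 :=
  sub_pos.mpr (sq_lt_sq' hx.1 hx.2)

lemma hasDerivAt_arcsin_div (hx : x ∈ Ioo (-r) r) :
    HasDerivAt (fun y => arcsin (y / r)) (√(r ^ 2 - x ^ 2))⁻¹ x := by
  have hr : 0 < r := by linarith [hx.1, hx.2]
  have hne_neg_one : x / r ≠ -1 := by
    rw [Ne, div_eq_iff hr.ne']; linarith [hx.1]
  have hne_one : x / r ≠ 1 := by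
    rw [Ne, div_eq_iff hr.ne']; linarith [hx.2]
  have hscale : √(r ^ 2 - x ^ 2) = r * √(1 - (x / r) ^ 2) := by
    rw [show r ^ 2 - x ^ 2 = r ^ 2 * (1 - (x / r) ^ 2) by field_simp,
      sqrt_mul (sq_nonneg r), sqrt_sq hr.le]
  refine ((hasDerivAt_arcsin hne_neg_one hne_one).comp x
    ((hasDerivAt_id x).div_const r)).congr_deriv ?_
  rw [hscale, one_div_mul_one_div, mul_comm, one_div]

lemma continuous_arcsin_div (r : ℝ) : Continuous fun y => arcsin (y / r) :=
  continuous_arcsin.comp (continuous_id.div_const r)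

lemma intervalIntegrable_inv_sqrt_sq_sub_sq (hr : 0 ≤ r) :
    IntervalIntegrable (fun y => (√(r ^ 2 - y ^ 2))⁻¹) volume (-r) r := by
  refine intervalIntegral.intervalIntegrable_deriv_of_nonneg
    (continuous_arcsin_div r).continuousOn (fun y hy => ?_) (fun y _ => by positivity)
  rw [min_eq_left (neg_le_self hr), max_eq_right (neg_le_self hr)] at hy
  exact hasDerivAt_arcsin_div hy

lemma integral_inv_sqrt_sq_sub_sq (hr : 0 < r) :
    ∫ y in (-r)..r, (√(r ^ 2 - y ^ 2))⁻¹ = π := by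
  rw [intervalIntegral.integral_eq_sub_of_hasDerivAt_of_le (neg_le_self hr.le)
    (continuous_arcsin_div r).continuousOn (fun y hy => hasDerivAt_arcsin_div hy)
    (intervalIntegrable_inv_sqrt_sq_sub_sq hr.le),
    neg_div, div_self hr.ne', arcsin_neg, arcsin_one]
  ring

lemma intervalIntegrable_inv_sub_mul_sqrt {a b : ℝ} (ha : a ∈ Icc (-r) r) (hb : b ∈ Icc (-r) r)
    (hη : η ∉ uIcc a b) :
    IntervalIntegrable (fun y => ((y - η) * √(r ^ 2 - y ^ 2))⁻¹) volume a b := by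
  have hr : -r ≤ r := ha.1.trans ha.2
  have hsqrt : IntervalIntegrable (fun y => (√(r ^ 2 - y ^ 2))⁻¹) volume a b :=
    (intervalIntegrable_inv_sqrt_sq_sub_sq (neg_le_self_iff.mp hr)).mono_set
      (uIcc_subset_uIcc (uIcc_of_le hr ▸ ha) (uIcc_of_le hr ▸ hb))
  have hinv : ContinuousOn (fun y => (y - η)⁻¹) (uIcc a b) :=
    (continuousOn_id.sub continuousOn_const).inv₀
      fun y hy => sub_ne_zero.mpr (ne_of_mem_of_not_mem hy hη)
  simpa only [mul_inv] using hsqrt.continuousOn_mul hinv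

/-- Half the squared distance from the point `(x, √(r² - x²))` of the upper semicircle of radius
`r` to the point `(η, -√(r² - η²))` of the lower one. It is the denominator in the primitive
`log |(x - η) / circlePolar r η x| / √(r² - η²)` of `1 / ((x - η) √(r² - x²))`. -/
noncomputable def circlePolar (r η x : ℝ) : ℝ :=
  r ^ 2 - η * x + √(r ^ 2 - η ^ 2) * √(r ^ 2 - x ^ 2)

lemma circlePolar_pos (hη : η ∈ Ioo (-r) r) (hx : x ∈ Icc (-r) r) : 0 < circlePolar r η x := by
  have hηx : η * x < r ^ 2 := calc
    η * x ≤ |η| * |x| := (le_abs_self _).trans_eq (abs_mul η x)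
    _ ≤ |η| * r := by gcongr; exact abs_le.mpr hx
    _ < r * r := by
      have hηr : |η| < r := abs_lt.mpr hη
      exact mul_lt_mul_of_pos_right hηr ((abs_nonneg η).trans_lt hηr)
    _ = r ^ 2 := (sq r).symm
  exact add_pos_of_pos_of_nonneg (sub_pos.mpr hηx) (by positivity)

lemma circlePolar_self (r η : ℝ) : circlePolar r η r = r * (r - η) := by
  rw [circlePolar, sub_self, sqrt_zero]
  ring

lemma circlePolar_neg_self (r η : ℝ) : circlePolar r η (-r) = -r * (-r - η) := by
  rw [circlePolar, neg_sq, sub_self, sqrt_zero]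
  ring

lemma continuous_circlePolar (r η : ℝ) : Continuous (circlePolar r η) := by
  unfold circlePolar
  fun_prop

lemma hasDerivAt_circlePolar (hx : x ∈ Ioo (-r) r) :
    HasDerivAt (circlePolar r η) (-η - √(r ^ 2 - η ^ 2) * (x / √(r ^ 2 - x ^ 2))) x := by
  have hsqrt : HasDerivAt (fun y => √(r ^ 2 - y ^ 2)) (-(2 * x) / (2 * √(r ^ 2 - x ^ 2))) x := by
    refine HasDerivAt.sqrt ?_ (sq_sub_sq_pos_of_mem_Ioo hx).ne'
    simpa using ((hasDerivAt_id x).pow 2).const_sub (r ^ 2)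
  refine ((((hasDerivAt_id x).const_mul η).const_sub (r ^ 2)).add
    (hsqrt.const_mul √(r ^ 2 - η ^ 2))).congr_deriv ?_
  rw [neg_div, mul_div_mul_left _ _ two_ne_zero]
  ring

lemma logDeriv_circlePolar (hη : η ∈ Ioo (-r) r) (hx : x ∈ Ioo (-r) r) (hne : x ≠ η) :
    logDeriv (circlePolar r η) x =
      (x - η)⁻¹ - √(r ^ 2 - η ^ 2) * ((x - η) * √(r ^ 2 - x ^ 2))⁻¹ := by
  have hpos : 0 < circlePolar r η x := circlePolar_pos hη (Ioo_subset_Icc_self hx)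
  have hx_pos : 0 < √(r ^ 2 - x ^ 2) := sqrt_pos.mpr (sq_sub_sq_pos_of_mem_Ioo hx)
  have hx_sq : √(r ^ 2 - x ^ 2) ^ 2 = r ^ 2 - x ^ 2 := sq_sqrt (sq_sub_sq_pos_of_mem_Ioo hx).le
  have hη_sq : √(r ^ 2 - η ^ 2) ^ 2 = r ^ 2 - η ^ 2 := sq_sqrt (sq_sub_sq_pos_of_mem_Ioo hη).le
  have hsub : x - η ≠ 0 := sub_ne_zero.mpr hne
  rw [logDeriv_apply, (hasDerivAt_circlePolar hx).deriv, div_eq_iff hpos.ne', circlePolar]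
  field_simp
  linear_combination (-√(r ^ 2 - η ^ 2)) * hx_sq + √(r ^ 2 - x ^ 2) * hη_sq

lemma hasDerivAt_neg_log_circlePolar_add_log (hη : η ∈ Ioo (-r) r) (hx : x ∈ Ioo (-r) r)
    (hne : x ≠ η) :
    HasDerivAt (fun y => -log (circlePolar r η y) + log (y - η))
      (√(r ^ 2 - η ^ 2) * ((x - η) * √(r ^ 2 - x ^ 2))⁻¹) x := by
  have hpolar := (hasDerivAt_circlePolar (η := η) hx).differentiableAt.hasDerivAt.log
    (circlePolar_pos hη (Ioo_subset_Icc_self hx)).ne'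
  rw [← logDeriv_apply, logDeriv_circlePolar hη hx hne] at hpolar
  refine (hpolar.neg.add
    (((hasDerivAt_id x).sub_const η).log (sub_ne_zero.mpr hne))).congr_deriv ?_
  rw [id, one_div]
  ring

lemma log_circlePolar_self (hr : r ≠ 0) (hη : η ≠ r) :
    log (circlePolar r η r) = log r + log (r - η) := by
  rw [circlePolar_self, log_mul hr (sub_ne_zero.mpr hη.symm)]

lemma log_circlePolar_neg_self (hr : r ≠ 0) (hη : η ≠ -r) :
    log (circlePolar r η (-r)) = log r + log (-r - η) := by
  rw [circlePolar_neg_self, log_mul (neg_ne_zero.mpr hr) (sub_ne_zero.mpr hη.symm),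
    log_neg_eq_log]

lemma hasPrincipalValue_inv_sub_mul_sqrt (hη : η ∈ Ioo (-r) r) :
    HasPrincipalValue (fun y => ((y - η) * √(r ^ 2 - y ^ 2))⁻¹) (-r) η r 0 := by
  have hr : 0 < r := by linarith [hη.1, hη.2]
  have hη_pos : 0 < √(r ^ 2 - η ^ 2) := sqrt_pos.mpr (sq_sub_sq_pos_of_mem_Ioo hη)
  have hcont : ContinuousOn (fun y => -log (circlePolar r η y)) (Icc (-r) r) :=
    ((continuous_circlePolar r η).continuousOn.log fun y hy => (circlePolar_pos hη hy).ne').neg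
  have hscaled := HasPrincipalValue.of_hasDerivAt_add_log (k := (1 : ℝ)) hη.1 hη.2 hcont
    (fun y hy hne => by
      simpa only [smul_eq_mul, mul_one] using hasDerivAt_neg_log_circlePolar_add_log hη hy hne)
    (fun y hy => (intervalIntegrable_inv_sub_mul_sqrt ⟨le_rfl, neg_le_self hr.le⟩
      ⟨hy.1, (hy.2.trans hη.2).le⟩
      (by rw [uIcc_of_le hy.1]; exact fun h => hy.2.not_ge h.2)).const_mul _)
    (fun y hy => (intervalIntegrable_inv_sub_mul_sqrt ⟨(hη.1.trans hy.1).le, hy.2⟩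
      ⟨neg_le_self hr.le, le_rfl⟩
      (by rw [uIcc_of_le hy.2]; exact fun h => hy.1.not_ge h.1)).const_mul _)
  have hends : -log (circlePolar r η r) + log (r - η) • (1 : ℝ) -
      (-log (circlePolar r η (-r)) + log (-r - η) • (1 : ℝ)) = 0 := by
    rw [log_circlePolar_self hr.ne' hη.2.ne, log_circlePolar_neg_self hr.ne' hη.1.ne']
    simp only [smul_eq_mul]
    ring
  rw [hends] at hscaled
  rw [← smul_zero (√(r ^ 2 - η ^ 2))⁻¹]
  exact (hscaled.const_smul _).congr hη.1 hη.2 fun y _ => inv_mul_cancel_left₀ hη_pos.ne' _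

lemma inv_sqrt_add_mul_inv_sub_mul_sqrt (hne : x ≠ η) :
    (√(r ^ 2 - x ^ 2))⁻¹ + η * ((x - η) * √(r ^ 2 - x ^ 2))⁻¹ =
      x / ((x - η) * √(r ^ 2 - x ^ 2)) := by
  have hsub : x - η ≠ 0 := sub_ne_zero.mpr hne
  field_simp
  ring

end ArcsineDensity

/-- Finite Hilbert transform of the odd extension of the genus-0 condensate DOS:
the principal-value integral of `μ/((μ-η)√(λ²-μ²))` over `(-λ, λ)` equals `π`. -/
theorem genus0_condensate_FHT_u (lam η : ℝ) (hlam : 0 < lam)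
    (hη : η ∈ Set.Ioo (-lam) lam) :
    Filter.Tendsto
      (fun ε : ℝ =>
        (∫ μ in (-lam)..(η - ε), μ / ((μ - η) * Real.sqrt (lam ^ 2 - μ ^ 2))) +
        ∫ μ in (η + ε)..lam, μ / ((μ - η) * Real.sqrt (lam ^ 2 - μ ^ 2)))
      (nhdsWithin 0 (Set.Ioi 0)) (nhds Real.pi) := by
  have hdensity := HasPrincipalValue.of_intervalIntegrable hη.1 hη.2
    (intervalIntegrable_inv_sqrt_sq_sub_sq hlam.le)
  have hkernel := (hasPrincipalValue_inv_sub_mul_sqrt hη).const_smul η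
  have hsum := (hdensity.add hη.1 hη.2 hkernel).congr hη.1 hη.2
    fun μ hμ => inv_sqrt_add_mul_inv_sub_mul_sqrt hμ.2
  rw [integral_inv_sqrt_sq_sub_sq hlam, smul_zero, add_zero] at hsum
  exact hsum.tendsto
end

section
/- Let 0 < λ. Then the second moment of the KdV wave field in the genus-0 soliton condensate equals λ⁴; explicitly, (16/3)·∫₀^λ η³ · (η/(π·√(λ² − η²))) dη = λ⁴. Consequently, together with ⟨φ⟩ = λ², the variance ⟨φ²⟩ − ⟨φ⟩² of the genus-0 condensate wave field vanishes. -/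
/-!
The substitution `η = λ cos θ` turns `dη / √(λ² - η²)` into `-dθ`, so the moments of the condensate
density of states are Wallis integrals: the `(2k+1)`-st one is
`λ^(2k+2) / π * ∫₀^{π/2} cos^(2k+2) θ dθ`, that is `λ² / 4` for `k = 0` and `3 λ⁴ / 16` for `k = 1`.
-/

open Real Set

theorem sqrt_sq_sub_mul_cos_sq {r θ : ℝ} (hr : 0 ≤ r) (hθ : 0 ≤ sin θ) :
    √(r ^ 2 - (r * cos θ) ^ 2) = r * sin θ := by
  rw [← sqrt_sq (mul_nonneg hr hθ), mul_pow, mul_pow, sin_sq]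
  ring_nf

theorem integral_inv_sqrt_sq_sub_sq_smul {E : Type*} [NormedAddCommGroup E] [NormedSpace ℝ E]
    {r a b : ℝ} (hr : 0 < r) (ha : a ∈ Icc 0 π) (hb : b ∈ Icc 0 π) (f : ℝ → E) :
    ∫ x in r * cos a..r * cos b, (√(r ^ 2 - x ^ 2))⁻¹ • f x = ∫ θ in b..a, f (r * cos θ) := by
  have sin_pos_of_mem : ∀ θ ∈ Ioo (min a b) (max a b), 0 < sin θ := fun θ hθ ↦
    sin_pos_of_mem_Ioo ⟨(le_min ha.1 hb.1).trans_lt hθ.1, hθ.2.trans_le (max_le ha.2 hb.2)⟩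
  have hasDerivAt_mul_cos : ∀ θ ∈ Ioo (min a b) (max a b),
      HasDerivAt (fun t ↦ r * cos t) (r * -sin θ) θ := fun θ _ ↦ (hasDerivAt_cos θ).const_mul r
  have jacobian_cancels : ∀ θ ∈ Ioo (min a b) (max a b),
      (r * -sin θ) • (√(r ^ 2 - (r * cos θ) ^ 2))⁻¹ • f (r * cos θ) = -f (r * cos θ) := by
    intro θ hθ
    have hsin := sin_pos_of_mem θ hθ
    rw [sqrt_sq_sub_mul_cos_sq hr.le hsin.le, smul_smul, mul_neg, neg_mul,
      mul_inv_cancel₀ (mul_pos hr hsin).ne', neg_one_smul]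
  calc ∫ x in r * cos a..r * cos b, (√(r ^ 2 - x ^ 2))⁻¹ • f x
      = ∫ θ in a..b, (r * -sin θ) • (√(r ^ 2 - (r * cos θ) ^ 2))⁻¹ • f (r * cos θ) :=
        (intervalIntegral.integral_deriv_smul_comp_of_deriv_nonpos
          (g := fun x ↦ (√(r ^ 2 - x ^ 2))⁻¹ • f x) (by fun_prop) hasDerivAt_mul_cos
          fun θ hθ ↦ mul_nonpos_of_nonneg_of_nonpos hr.le
            (neg_nonpos.2 (sin_pos_of_mem θ hθ).le)).symm
    _ = ∫ θ in a..b, -f (r * cos θ) := intervalIntegral.integral_congr_uIoo jacobian_cancels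
    _ = ∫ θ in b..a, f (r * cos θ) := by
        rw [intervalIntegral.integral_neg, ← intervalIntegral.integral_symm]

theorem integral_pow_div_sqrt_sq_sub_sq {r : ℝ} (hr : 0 < r) (n : ℕ) :
    ∫ x in (0 : ℝ)..r, x ^ n / √(r ^ 2 - x ^ 2) = r ^ n * ∫ θ in (0 : ℝ)..π / 2, cos θ ^ n := by
  have substitution := integral_inv_sqrt_sq_sub_sq_smul hr (a := π / 2) (b := 0)
    ⟨by positivity, by linarith [pi_pos]⟩ ⟨le_rfl, pi_pos.le⟩ (fun x ↦ x ^ n)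
  simpa only [cos_pi_div_two, mul_zero, cos_zero, mul_one, smul_eq_mul, inv_mul_eq_div, mul_pow,
    intervalIntegral.integral_const_mul] using substitution

theorem integral_cos_pow_even_zero_pi_div_two (n : ℕ) :
    ∫ θ in (0 : ℝ)..π / 2, cos θ ^ (2 * n) =
      π / 2 * ∏ i ∈ Finset.range n, (2 * (i : ℝ) + 1) / (2 * i + 2) := by
  rw [EulerSine.integral_cos_pow_eq, integral_sin_pow_even]
  ring

theorem integral_pow_odd_mul_condensate_density {r : ℝ} (hr : 0 < r) (k : ℕ) :
    ∫ x in (0 : ℝ)..r, x ^ (2 * k + 1) * (x / (π * √(r ^ 2 - x ^ 2))) =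
      r ^ (2 * (k + 1)) / 2 * ∏ i ∈ Finset.range (k + 1), (2 * (i : ℝ) + 1) / (2 * i + 2) := by
  calc ∫ x in (0 : ℝ)..r, x ^ (2 * k + 1) * (x / (π * √(r ^ 2 - x ^ 2)))
      = ∫ x in (0 : ℝ)..r, π⁻¹ * (x ^ (2 * (k + 1)) / √(r ^ 2 - x ^ 2)) := by
        congr! 2 with x
        ring
    _ = π⁻¹ * (r ^ (2 * (k + 1)) *
          (π / 2 * ∏ i ∈ Finset.range (k + 1), (2 * (i : ℝ) + 1) / (2 * i + 2))) := by
        rw [intervalIntegral.integral_const_mul, integral_pow_div_sqrt_sq_sub_sq hr,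
          integral_cos_pow_even_zero_pi_div_two]
    _ = r ^ (2 * (k + 1)) / 2 *
          ∏ i ∈ Finset.range (k + 1), (2 * (i : ℝ) + 1) / (2 * i + 2) := by
        field_simp

/-- The second moment of the KdV wave field in the genus-0 soliton condensate equals `λ⁴`,
and consequently (together with mean `λ²`) the variance vanishes. -/
theorem genus0_condensate_second_moment_and_variance (lam : ℝ) (hlam : 0 < lam) :
    (16 / 3) * (∫ η in (0:ℝ)..lam,
        η ^ 3 * (η / (Real.pi * Real.sqrt (lam ^ 2 - η ^ 2)))) = lam ^ 4 ∧
    (16 / 3) * (∫ η in (0:ℝ)..lam,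
        η ^ 3 * (η / (Real.pi * Real.sqrt (lam ^ 2 - η ^ 2)))) -
      (4 * ∫ η in (0:ℝ)..lam, η * (η / (Real.pi * Real.sqrt (lam ^ 2 - η ^ 2)))) ^ 2 = 0 := by
  have second_moment : (16 / 3) * (∫ η in (0:ℝ)..lam,
      η ^ 3 * (η / (π * √(lam ^ 2 - η ^ 2)))) = lam ^ 4 := by
    rw [integral_pow_odd_mul_condensate_density hlam 1, Finset.prod_range_succ,
      Finset.prod_range_one]
    push_cast
    ring
  have mean : 4 * ∫ η in (0:ℝ)..lam, η * (η / (π * √(lam ^ 2 - η ^ 2))) = lam ^ 2 := by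
    have first_moment := integral_pow_odd_mul_condensate_density hlam 0
    simp only [mul_zero, zero_add, pow_one, mul_one, Finset.prod_range_one, Nat.cast_zero]
      at first_moment
    rw [first_moment]
    ring
  refine ⟨second_moment, ?_⟩
  rw [second_moment, mean]
  ring
end

section
/- Let 0 < λ₁ < λ₂ < λ₃ and write R̃(y) = √((y² − λ₁²)(λ₂² − y²)(λ₃² − y²)). Then ∫_{λ₁}^{λ₂} y⁵/R̃(y) dy = (2(λ₁² + λ₂² + λ₃²)/3)·∫_{λ₁}^{λ₂} y³/R̃(y) dy − ((λ₁²λ₂² + λ₁²λ₃² + λ₂²λ₃²)/3)·∫_{λ₁}^{λ₂} y/R̃(y) dy. -/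
/-!
The substitution `x = y²` turns the odd moments over `(l1, l2)` into moments over `(a, b)` against
`1 / √Q`, where `Q x = (x - a) * (b - x) * (c - x)` and `a, b, c` are the squares of `l1, l2, l3`.
There `Q' = 3 x² - 2 (a + b + c) x + (a b + a c + b c)`, and `Q' / √Q = (2 √Q)'` has integral zero
because `Q` vanishes at both endpoints. Splitting this integral into moments is legitimate because
`1 / √((x - a) * (b - x))` is an affine rescaling of the Chebyshev weight `1 / √(1 - t²)`.
-/

open Set MeasureTheory intervalIntegral

theorem intervalIntegrable_inv_sqrt_sub_mul_sub (a b : ℝ) :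
    IntervalIntegrable (fun x => (√((x - a) * (b - x)))⁻¹) volume a b := by
  rcases eq_or_ne a b with rfl | hab
  · exact .refl
  have hba : b - a ≠ 0 := sub_ne_zero.2 hab.symm
  have radicand_rescale (x : ℝ) :
      1 - (2 / (b - a) * x - (a + b) / (b - a)) ^ 2 =
        (2 / (b - a)) ^ 2 * ((x - a) * (b - x)) := by
    field_simp
    ring
  have left_endpoint : (-1 + (a + b) / (b - a)) / (2 / (b - a)) = a := by
    field_simp
    ring
  have right_endpoint : (1 + (a + b) / (b - a)) / (2 / (b - a)) = b := by
    field_simp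
    ring
  have rescaled_weight :=
    ((Polynomial.Chebyshev.intervalIntegrable_sqrt_one_sub_sq_inv.comp_sub_right
      ((a + b) / (b - a))).comp_mul_left (c := 2 / (b - a))).const_mul |2 / (b - a)|
  rw [left_endpoint, right_endpoint] at rescaled_weight
  refine rescaled_weight.congr fun x _ => ?_
  have scale_ne_zero : |2 / (b - a)| ≠ 0 := abs_ne_zero.2 (div_ne_zero two_ne_zero hba)
  rw [radicand_rescale, Real.sqrt_inv, Real.sqrt_mul (sq_nonneg _), Real.sqrt_sq_eq_abs, mul_inv,
    mul_inv_cancel_left₀ scale_ne_zero]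

theorem intervalIntegrable_div_sqrt_sub_mul_sub_mul {a b : ℝ} {f w : ℝ → ℝ}
    (hf : ContinuousOn f (uIcc a b)) (hw : ContinuousOn w (uIcc a b))
    (hw_pos : ∀ x ∈ uIcc a b, 0 < w x) :
    IntervalIntegrable (fun x => f x / √((x - a) * (b - x) * w x)) volume a b := by
  have hfw : ContinuousOn (fun x => f x / √(w x)) (uIcc a b) :=
    hf.div hw.sqrt fun x hx => (Real.sqrt_pos.2 (hw_pos x hx)).ne'
  refine ((intervalIntegrable_inv_sqrt_sub_mul_sub a b).continuousOn_mul hfw).congr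
    fun x hx => ?_
  rw [Real.sqrt_mul' _ (hw_pos x (uIoc_subset_uIcc hx)).le]
  ring

theorem integral_deriv_div_sqrt_eq_sub {a b : ℝ} {p p' : ℝ → ℝ} (hab : a ≤ b)
    (hp : ContinuousOn p (Icc a b)) (hp' : ∀ x ∈ Ioo a b, HasDerivAt p (p' x) x)
    (hp_ne : ∀ x ∈ Ioo a b, p x ≠ 0)
    (hint : IntervalIntegrable (fun x => p' x / √(p x)) volume a b) :
    ∫ x in a..b, p' x / √(p x) = 2 * √(p b) - 2 * √(p a) := by
  refine integral_eq_sub_of_hasDerivAt_of_le hab (hp.sqrt.const_mul 2) (fun x hx => ?_) hint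
  refine (((hp' x hx).sqrt (hp_ne x hx)).const_mul 2).congr_deriv ?_
  ring

theorem hasDerivAt_sub_mul_sub_mul_sub (a b c x : ℝ) :
    HasDerivAt (fun x => (x - a) * (b - x) * (c - x))
      (3 * x ^ 2 - 2 * (a + b + c) * x + (a * b + a * c + b * c)) x := by
  refine ((((hasDerivAt_id x).sub_const a).mul ((hasDerivAt_id x).const_sub b)).mul
    ((hasDerivAt_id x).const_sub c)).congr_deriv ?_
  simp only [Pi.mul_apply, id_eq]
  ring

theorem intervalIntegrable_div_sqrt_cubic {a b c : ℝ} {f : ℝ → ℝ} (hab : a ≤ b) (hbc : b < c)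
    (hf : ContinuousOn f (Icc a b)) :
    IntervalIntegrable (fun x => f x / √((x - a) * (b - x) * (c - x))) volume a b := by
  rw [← uIcc_of_le hab] at hf
  refine intervalIntegrable_div_sqrt_sub_mul_sub_mul hf (by fun_prop) fun x hx => ?_
  rw [uIcc_of_le hab] at hx
  exact sub_pos.2 (hx.2.trans_lt hbc)

theorem integral_deriv_cubic_div_sqrt_cubic {a b c : ℝ} (hab : a ≤ b) (hbc : b < c) :
    ∫ x in a..b, (3 * x ^ 2 - 2 * (a + b + c) * x + (a * b + a * c + b * c)) /
      √((x - a) * (b - x) * (c - x)) = 0 := by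
  have cubic_pos : ∀ x ∈ Ioo a b, 0 < (x - a) * (b - x) * (c - x) := fun x hx =>
    mul_pos (mul_pos (sub_pos.2 hx.1) (sub_pos.2 hx.2)) (sub_pos.2 (hx.2.trans hbc))
  rw [integral_deriv_div_sqrt_eq_sub hab (by fun_prop)
    (fun x _ => hasDerivAt_sub_mul_sub_mul_sub a b c x) (fun x hx => (cubic_pos x hx).ne')
    (intervalIntegrable_div_sqrt_cubic hab hbc (by fun_prop))]
  simp

theorem integral_sq_div_sqrt_cubic {a b c : ℝ} (hab : a ≤ b) (hbc : b < c) :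
    ∫ x in a..b, x ^ 2 / √((x - a) * (b - x) * (c - x)) =
      2 * (a + b + c) / 3 * (∫ x in a..b, x / √((x - a) * (b - x) * (c - x))) -
        (a * b + a * c + b * c) / 3 * ∫ x in a..b, 1 / √((x - a) * (b - x) * (c - x)) := by
  have integrable_div {f : ℝ → ℝ} (hf : Continuous f) :
      IntervalIntegrable (fun x => f x / √((x - a) * (b - x) * (c - x))) volume a b :=
    intervalIntegrable_div_sqrt_cubic hab hbc hf.continuousOn
  have quadratic_term := (integrable_div (continuous_pow 2)).const_mul 3
  have linear_term := (integrable_div continuous_id').const_mul (2 * (a + b + c))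
  have constant_term :=
    (integrable_div (continuous_const (y := 1))).const_mul (a * b + a * c + b * c)
  have moments_sum_eq_zero :
      3 * (∫ x in a..b, x ^ 2 / √((x - a) * (b - x) * (c - x))) -
        2 * (a + b + c) * (∫ x in a..b, x / √((x - a) * (b - x) * (c - x))) +
        (a * b + a * c + b * c) * (∫ x in a..b, 1 / √((x - a) * (b - x) * (c - x))) = 0 := by
    simp only [← intervalIntegral.integral_const_mul]
    rw [← integral_sub quadratic_term linear_term,
      ← integral_add (quadratic_term.sub linear_term) constant_term,
      ← integral_deriv_cubic_div_sqrt_cubic hab hbc]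
    congr with x
    ring
  linarith

theorem integral_odd_pow_div_comp_sq {a b : ℝ} (ha : 0 ≤ a) (hb : 0 ≤ b) (f : ℝ → ℝ) (k : ℕ) :
    ∫ y in a..b, y ^ (2 * k + 1) / f (y ^ 2) = (∫ x in a ^ 2..b ^ 2, x ^ k / f x) / 2 := by
  have substitution :
      ∫ y in a..b, (2 * y) • ((fun x => x ^ k / f x) ∘ (· ^ 2)) y =
        ∫ x in a ^ 2..b ^ 2, x ^ k / f x :=
    integral_deriv_smul_comp_of_deriv_nonneg (by fun_prop)
      (fun y _ => by simpa using hasDerivAt_pow 2 y)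
      (fun y hy => mul_nonneg zero_le_two ((le_min ha hb).trans hy.1.le))
  rw [← substitution, ← intervalIntegral.integral_div]
  congr with y
  simp only [Function.comp_apply, smul_eq_mul]
  ring

/-- Reduction identity for moment integrals over the s-gap `(λ₁, λ₂)` of the genus-1
KdV soliton condensate, with `R̃(y) = √((y²-λ₁²)(λ₂²-y²)(λ₃²-y²))`:
`∫ y⁵/R̃ = (2(λ₁²+λ₂²+λ₃²)/3)·∫ y³/R̃ - ((λ₁²λ₂²+λ₁²λ₃²+λ₂²λ₃²)/3)·∫ y/R̃`. -/
theorem sgap_fifth_moment_reduction (l1 l2 l3 : ℝ)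
    (h1 : 0 < l1) (h12 : l1 < l2) (h23 : l2 < l3) :
    ∫ y in l1..l2,
        y ^ 5 / Real.sqrt ((y ^ 2 - l1 ^ 2) * (l2 ^ 2 - y ^ 2) * (l3 ^ 2 - y ^ 2)) =
      (2 * (l1 ^ 2 + l2 ^ 2 + l3 ^ 2) / 3) *
        (∫ y in l1..l2,
          y ^ 3 / Real.sqrt ((y ^ 2 - l1 ^ 2) * (l2 ^ 2 - y ^ 2) * (l3 ^ 2 - y ^ 2))) -
      ((l1 ^ 2 * l2 ^ 2 + l1 ^ 2 * l3 ^ 2 + l2 ^ 2 * l3 ^ 2) / 3) *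
        (∫ y in l1..l2,
          y / Real.sqrt ((y ^ 2 - l1 ^ 2) * (l2 ^ 2 - y ^ 2) * (l3 ^ 2 - y ^ 2))) := by
  have l2_nonneg : 0 ≤ l2 := (h1.trans h12).le
  have moment_eq := integral_odd_pow_div_comp_sq h1.le l2_nonneg
    fun x => √((x - l1 ^ 2) * (l2 ^ 2 - x) * (l3 ^ 2 - x))
  have fifth_moment := moment_eq 2
  have third_moment := moment_eq 1
  have first_moment := moment_eq 0
  norm_num only [pow_one, pow_zero] at fifth_moment third_moment first_moment
  have reduction := integral_sq_div_sqrt_cubic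
    (pow_le_pow_left₀ h1.le h12.le 2) (pow_lt_pow_left₀ h23 l2_nonneg two_ne_zero)
  rw [fifth_moment, third_moment, first_moment, reduction]
  ring
end
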